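/- Let N ≥ 2 and 0 < s < t < 1. The generalized fractional isoperimetric problem admits a minimizer: there exists a measurable set E* ⊆ ℝ^N with 0 < |E*| < ∞ and P_t(E*) < ∞ such that W_{s,t}(E*) ≤ W_{s,t}(E) for every measurable set E ⊆ ℝ^N with 0 < |E| < ∞ and P_t(E) < ∞. -/

import Mathlib

open MeasureTheory ENNReal

/-- Interaction energy `∫_A ∫_B |x-y|^{-(N+α)} dy dx` in `[0,∞]`. -/
noncomputable def interEnergy (N : ℕ) (α : ℝ)
    (A B : Set (EuclideanSpace ℝ (Fin N))) : ℝ≥0∞ :=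
  ∫⁻ x in A, ∫⁻ y in B, ENNReal.ofReal (‖x - y‖ ^ (-((N : ℝ) + α))) ∂volume ∂volume

/-- The fractional `α`-perimeter `P_α(E) = ∫_E ∫_{Eᶜ} |x-y|^{-(N+α)} dy dx`. -/
noncomputable def fracPer (N : ℕ) (α : ℝ) (E : Set (EuclideanSpace ℝ (Fin N))) : ℝ≥0∞ :=
  interEnergy N α E Eᶜ

/-- The scale-invariant generalized isoperimetric functional
`W_{s,t}(E) = ((1-t) P_t(E))^{N-s} / (s P_s(E))^{N-t}`. -/
noncomputable def isoW (N : ℕ) (s t : ℝ) (E : Set (EuclideanSpace ℝ (Fin N))) : ℝ :=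
  ((1 - t) * (fracPer N t E).toReal) ^ ((N : ℝ) - s) /
    (s * (fracPer N s E).toReal) ^ ((N : ℝ) - t)

open Filter Topology Module
open scoped symmDiff

/-!
After a dilation one may assume `P_s(E) = 1`, and then `W_{s,t}` is an increasing function of
`P_t(E)`. Along a minimizing sequence `E_n` the bounds on `P_s` and `P_t` force each `E_n` to fill
more than half of some ball of a fixed radius; translate that ball to the origin. Replacing
indicators by their averages over small balls costs little in `L¹` when `P_t` is bounded, while the
averages converge pointwise along a weakly convergent subsequence. Hence a subsequence converges
almost everywhere to a set `F` with `0 < |F| < ∞`, and `P_s(F) ≤ 1`, `P_t(F) ≤ m := inf P_t` by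
Fatou.

No perimeter is lost at infinity. The pairs separated by `E_n ∆ F` form the symmetric difference of
the pairs separated by `E_n` and by `F`, so `P_t(F) + P_t(E_n ∆ F) ≤ P_t(E_n) + o(1)` and
`P_s(E_n ∆ F) ≥ 1 - P_s(F)`. Scale invariance gives `P_t ≥ m P_s^θ` with `θ = (N-t)/(N-s) < 1`, so
`a = P_s(F)` satisfies `m (a^θ + (1-a)^θ) ≤ m`. Strict concavity rules out `0 < a < 1`; therefore
`P_s(F) = 1` and `F` is a minimizer.
-/

section SetConvergence

variable {X : Type*} [MeasurableSpace X] {μ : Measure X}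

theorem measure_le_liminf_of_ae_eventually_mem {A : ℕ → Set X} {E : Set X}
    (h : ∀ᵐ x ∂μ, x ∈ E → ∀ᶠ n in atTop, x ∈ A n) :
    μ E ≤ liminf (fun n => μ (A n)) atTop := by
  have hmono : Monotone fun n => ⋂ k ≥ n, A k := fun a b hab =>
    Set.biInter_subset_biInter_left fun _ hk => hab.trans hk
  calc μ E ≤ μ (⋃ n, ⋂ k ≥ n, A k) := by
        apply measure_mono_ae
        filter_upwards [h] with x hx hxE
        obtain ⟨n, hn⟩ := eventually_atTop.1 (hx hxE)
        exact Set.mem_iUnion.2 ⟨n, Set.mem_iInter₂.2 hn⟩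
    _ = ⨆ n, μ (⋂ k ≥ n, A k) := hmono.measure_iUnion
    _ ≤ ⨆ n, ⨅ k ≥ n, μ (A k) :=
        iSup_mono fun n => le_iInf₂ fun k hk => measure_mono (Set.iInter₂_subset k hk)
    _ = liminf (fun n => μ (A n)) atTop := liminf_eq_iSup_iInf_of_nat.symm

theorem le_measure_inter_of_ae_eventually_mem_iff {A : ℕ → Set X} {F B : Set X}
    (hA : ∀ n, MeasurableSet (A n)) (hF : MeasurableSet F)
    (hAF : ∀ᵐ x ∂μ, ∀ᶠ n in atTop, (x ∈ A n ↔ x ∈ F)) (hB : MeasurableSet B) (hμB : μ B ≠ ∞)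
    {c : ℝ≥0∞} (h : ∀ n, c ≤ μ (A n ∩ B)) : c ≤ μ (F ∩ B) := by
  refine ge_of_tendsto' (tendsto_measure_of_ae_tendsto_indicator atTop (hF.inter hB)
    (fun n => (hA n).inter hB) hB hμB (Eventually.of_forall fun n => Set.inter_subset_right) ?_) h
  filter_upwards [hAF] with x hx
  filter_upwards [hx] with n hn
  simp [hn]

theorem measure_add_measure_symmDiff_le (S : Set X) {T : Set X} (hT : MeasurableSet T) :
    μ T + μ (S ∆ T) ≤ μ S + 2 * μ (T \ S) :=
  calc μ T + μ (S ∆ T)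
      ≤ (μ (S ∩ T) + μ (T \ S)) + (μ (S \ T) + μ (T \ S)) := by
        gcongr
        · rw [Set.inter_comm]
          exact measure_le_inter_add_sdiff μ T S
        · exact measure_union_le _ _
    _ = (μ (S ∩ T) + μ (S \ T)) + 2 * μ (T \ S) := by ring
    _ = μ S + 2 * μ (T \ S) := by rw [measure_inter_add_sdiff S hT]

theorem half_measure_le_measure_compl_inter {E B : Set X} (hE : MeasurableSet E) (hB : μ B ≠ ∞)
    (h : μ (E ∩ B) ≤ μ B / 2) : μ B / 2 ≤ μ (Eᶜ ∩ B) := by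
  refine (ENNReal.add_le_add_iff_left (ENNReal.div_lt_top hB two_ne_zero).ne).1 ?_
  calc μ B / 2 + μ B / 2 = μ (B ∩ E) + μ (B \ E) := by
        rw [ENNReal.add_halves, measure_inter_add_sdiff _ hE]
    _ ≤ μ B / 2 + μ (Eᶜ ∩ B) := by
        rw [Set.inter_comm, Set.sdiff_eq, Set.inter_comm _ Eᶜ]
        gcongr

theorem exists_measurableSet_ae_eventually_mem_iff {A : ℕ → Set X} (hA : ∀ n, MeasurableSet (A n))
    (h : ∀ᵐ x ∂μ, ∃ l : ℝ, Tendsto (fun n => (A n).indicator (fun _ => (1 : ℝ)) x) atTop (𝓝 l)) :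
    ∃ F, MeasurableSet F ∧ ∀ᵐ x ∂μ, ∀ᶠ n in atTop, (x ∈ A n ↔ x ∈ F) := by
  refine ⟨{x | ∀ᶠ n in atTop, x ∈ A n}, ?_, ?_⟩
  · simp only [eventually_atTop, Set.ofPred_exists, Set.ofPred_forall]
    exact MeasurableSet.iUnion fun n => MeasurableSet.iInter fun k => MeasurableSet.iInter fun _ =>
      hA k
  filter_upwards [h] with x ⟨l, hl⟩
  by_cases hx : ∀ᶠ n in atTop, x ∈ A n
  · filter_upwards [hx] with n hn using iff_of_true hn hx
  have hl0 : l = 0 := tendsto_nhds_unique_of_frequently_eq hl tendsto_const_nhds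
    ((not_eventually.1 hx).mono fun n hn => Set.indicator_of_notMem hn _)
  filter_upwards [hl.eventually_lt_const (hl0 ▸ zero_lt_one)] with n hn
  refine iff_of_false (fun hmem => ?_) hx
  rw [Set.indicator_of_mem hmem] at hn
  exact hn.false

theorem exists_isFiniteMeasure_le_absolutelyContinuous (μ : Measure X) [SigmaFinite μ] :
    ∃ ν : Measure X, IsFiniteMeasure ν ∧ ν ≤ μ ∧ μ ≪ ν := by
  obtain ⟨g, hg_pos, hg_meas, hg_int⟩ := exists_pos_lintegral_lt_of_sigmaFinite μ one_ne_zero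
  have hmeas : Measurable fun x => min (g x : ℝ≥0∞) 1 :=
    hg_meas.coe_nnreal_ennreal.min measurable_const
  refine ⟨μ.withDensity fun x => min (g x) 1, isFiniteMeasure_withDensity ?_, ?_, ?_⟩
  · exact ((lintegral_mono fun x => min_le_left _ _).trans_lt (hg_int.trans one_lt_top)).ne
  · calc μ.withDensity (fun x => min (g x : ℝ≥0∞) 1)
        ≤ μ.withDensity 1 := withDensity_mono (ae_of_all _ fun x => min_le_right _ _)
      _ = μ := withDensity_one
  · refine withDensity_absolutelyContinuous' hmeas.aemeasurable (ae_of_all _ fun x => ?_)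
    exact (lt_min (ENNReal.coe_pos.2 (hg_pos x)) one_pos).ne'

end SetConvergence

section WeakCompactness

variable {X : Type*} [MeasurableSpace X] {μ : Measure X}

/-- Integration over `E`, as an element of the dual of `L¹(μ)`; equivalently, the indicator of `E`
seen as an element of `L^∞ = (L¹)*`. -/
noncomputable def setIntegralL1 (μ : Measure X) (E : Set X) : StrongDual ℝ (Lp ℝ 1 μ) :=
  L1.integralCLM ∘L LpToLpRestrictCLM X ℝ ℝ μ 1 E

theorem setIntegralL1_apply (E : Set X) (f : Lp ℝ 1 μ) :
    setIntegralL1 μ E f = ∫ x in E, f x ∂μ := by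
  rw [← integral_congr_ae (LpToLpRestrictCLM_coeFn ℝ E f), ← L1.integral_eq_integral,
    L1.integral_eq]
  rfl

theorem norm_setIntegralL1_le_one (E : Set X) : ‖setIntegralL1 μ E‖ ≤ 1 := by
  refine ContinuousLinearMap.opNorm_le_bound _ zero_le_one fun f => ?_
  rw [setIntegralL1_apply, one_mul, L1.norm_eq_integral_norm]
  exact (norm_integral_le_integral_norm _).trans
    (setIntegral_le_integral (L1.integrable_coeFn f).norm (ae_of_all _ fun x => norm_nonneg _))

theorem exists_subseq_tendsto_measureReal_inter [IsSeparable μ] {E : ℕ → Set X}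
    (hE : ∀ n, MeasurableSet (E n)) :
    ∃ φ : ℕ → ℕ, StrictMono φ ∧ ∀ B, MeasurableSet B → μ B ≠ ∞ →
      ∃ l, Tendsto (fun n => μ.real (E (φ n) ∩ B)) atTop (𝓝 l) := by
  have : Fact ((1 : ℝ≥0∞) ≠ ∞) := ⟨one_ne_top⟩
  have hball : ∀ n, StrongDual.toWeakDual (setIntegralL1 μ (E n)) ∈
      WeakDual.toStrongDual ⁻¹' Metric.closedBall 0 1 := fun n => by
    simpa using norm_setIntegralL1_le_one (E n)
  obtain ⟨a, -, φ, hφ, ha⟩ := WeakDual.isSeqCompact_closedBall ℝ (Lp ℝ 1 μ) 0 1 hball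
  refine ⟨φ, hφ, fun B hB hμB => ⟨a (indicatorConstLp 1 hB hμB 1), ?_⟩⟩
  refine (((WeakDual.eval_continuous _).tendsto a).comp ha).congr fun n => ?_
  change setIntegralL1 μ (E (φ n)) (indicatorConstLp 1 hB hμB 1) = _
  rw [setIntegralL1_apply, setIntegral_indicatorConstLp (hE _), smul_eq_mul, mul_one,
    Set.inter_comm]

end WeakCompactness

section CauchyApproximation

open scoped Uniformity

theorem cauchySeq_of_forall_exists_cauchySeq_mem {X : Type*} [UniformSpace X] {u : ℕ → X}
    (h : ∀ U ∈ 𝓤 X, ∃ v : ℕ → X, CauchySeq v ∧ ∀ n, (u n, v n) ∈ U) : CauchySeq u := by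
  refine cauchySeq_iff.2 fun V hV => ?_
  obtain ⟨U, hU, hsymm, hUV⟩ := comp_comp_symm_mem_uniformity_sets hV
  obtain ⟨v, hv, huv⟩ := h U hU
  obtain ⟨n₀, hn₀⟩ := cauchySeq_iff.1 hv U hU
  exact ⟨n₀, fun k hk l hl => hUV
    ⟨v l, ⟨v k, huv k, hn₀ k hk l hl⟩, hsymm.symm _ _ (huv l)⟩⟩

end CauchyApproximation

section ChangeOfVariables

theorem measurePreserving_withDensity_of_comp_eq {X : Type*} [MeasurableSpace X] {μ : Measure X}
    {f : X → X} {g : X → ℝ≥0∞} (hf : MeasurePreserving f μ μ) (hg : Measurable g)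
    (hgf : ∀ x, g (f x) = g x) :
    MeasurePreserving f (μ.withDensity g) (μ.withDensity g) := by
  refine ⟨hf.measurable, Measure.ext fun S hS => ?_⟩
  rw [Measure.map_apply hf.measurable hS, withDensity_apply _ (hf.measurable hS),
    withDensity_apply _ hS, ← hf.setLIntegral_comp_preimage hS hg]
  simp only [hgf]

theorem setLIntegral_preimage_smul {V : Type*} [NormedAddCommGroup V] [NormedSpace ℝ V]
    [FiniteDimensional ℝ V] [MeasurableSpace V] [BorelSpace V] (μ : Measure V)
    [μ.IsAddHaarMeasure] {c : ℝ} (hc : 0 < c) (S : Set V) (f : V → ℝ≥0∞) :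
    ∫⁻ x in (c • ·) ⁻¹' S, f (c • x) ∂μ =
      ENNReal.ofReal (c ^ (-(finrank ℝ V : ℝ))) * ∫⁻ x in S, f x ∂μ := by
  have hemb := measurableEmbedding_const_smul₀ (α := V) hc.ne'
  rw [← hemb.lintegral_map, ← hemb.restrict_map, Measure.map_addHaar_smul μ hc.ne',
    Measure.restrict_smul, lintegral_smul_measure, smul_eq_mul, Real.rpow_neg hc.le,
    Real.rpow_natCast, abs_of_pos (by positivity)]

end ChangeOfVariables

section Kernel

variable {V : Type*} [NormedAddCommGroup V] [NormedSpace ℝ V]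

/-- The kernel `|z|^{-(d+α)}` of the fractional `α`-perimeter in dimension `d`. Its value at `z = 0`
is the junk value `0`, which is harmless because the kernel is only ever integrated. -/
noncomputable def fracKernel (α : ℝ) (z : V) : ℝ≥0∞ :=
  ENNReal.ofReal (‖z‖ ^ (-((finrank ℝ V : ℝ) + α)))

@[fun_prop]
theorem measurable_fracKernel [MeasurableSpace V] [OpensMeasurableSpace V] (α : ℝ) :
    Measurable (fracKernel (V := V) α) := by
  unfold fracKernel
  fun_prop

theorem fracKernel_sub_comm (α : ℝ) (x y : V) : fracKernel α (x - y) = fracKernel α (y - x) := by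
  rw [fracKernel, fracKernel, norm_sub_rev]

theorem fracKernel_smul (α : ℝ) {c : ℝ} (hc : 0 < c) (z : V) :
    fracKernel α (c • z) =
      ENNReal.ofReal (c ^ (-((finrank ℝ V : ℝ) + α))) * fracKernel α z := by
  rw [fracKernel, fracKernel, norm_smul, Real.norm_of_nonneg hc.le,
    Real.mul_rpow hc.le (norm_nonneg z), ENNReal.ofReal_mul (by positivity)]

theorem ofReal_rpow_le_fracKernel {α r : ℝ} (hα : 0 ≤ α) {z : V} (hz : z ≠ 0) (hzr : ‖z‖ ≤ r) :
    ENNReal.ofReal (r ^ (-((finrank ℝ V : ℝ) + α))) ≤ fracKernel α z :=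
  ENNReal.ofReal_le_ofReal <|
    Real.rpow_le_rpow_of_nonpos (norm_pos_iff.2 hz) hzr (neg_nonpos.2 (by positivity))

end Kernel

section GagliardoMeasure

variable {V : Type*} [NormedAddCommGroup V] [NormedSpace ℝ V] [MeasurableSpace V]

/-- The measure `|x-y|^{-(d+α)} dx dy` on `V × V`: the fractional perimeter of `E` is the mass it
gives to `E ×ˢ Eᶜ`. -/
noncomputable def gagliardoMeasure (μ : Measure V) (α : ℝ) : Measure (V × V) :=
  (μ.prod μ).withDensity fun p => fracKernel α (p.1 - p.2)

/-- The fractional `α`-perimeter `∫_E ∫_{Eᶜ} |x-y|^{-(d+α)} dy dx` with respect to `μ`. -/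
noncomputable def fracPerimeter (μ : Measure V) (α : ℝ) (E : Set V) : ℝ≥0∞ :=
  ∫⁻ x in E, ∫⁻ y in Eᶜ, fracKernel α (x - y) ∂μ ∂μ

/-- The pairs of points exactly one of which lies in `E`. Writing this set as a symmetric difference
makes it additive in `E`, see `separatedPairs_symmDiff`. -/
def separatedPairs {X : Type*} (E : Set X) : Set (X × X) :=
  (Prod.fst ⁻¹' E) ∆ (Prod.snd ⁻¹' E)

theorem separatedPairs_symmDiff {X : Type*} (A E : Set X) :
    separatedPairs (A ∆ E) = separatedPairs A ∆ separatedPairs E := by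
  simp only [separatedPairs, Set.preimage_symmDiff]
  exact symmDiff_symmDiff_symmDiff_comm _ _ _ _

theorem separatedPairs_eq_union {X : Type*} (E : Set X) :
    separatedPairs E = E ×ˢ Eᶜ ∪ Prod.swap ⁻¹' (E ×ˢ Eᶜ) := by
  ext p
  simp [separatedPairs, Set.mem_symmDiff, and_comm]

theorem measurableSet_separatedPairs {X : Type*} [MeasurableSpace X] {E : Set X}
    (hE : MeasurableSet E) : MeasurableSet (separatedPairs E) :=
  (measurable_fst hE).symmDiff (measurable_snd hE)

theorem ae_gagliardoMeasure_fst_snd {μ : Measure V} {α : ℝ} {p : V → Prop} (h : ∀ᵐ x ∂μ, p x) :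
    ∀ᵐ q ∂gagliardoMeasure μ α, p q.1 ∧ p q.2 := by
  have hac : gagliardoMeasure μ α ≪ μ.prod μ := withDensity_absolutelyContinuous _ _
  exact hac.ae_le ((Measure.quasiMeasurePreserving_fst.ae h).and
    (Measure.quasiMeasurePreserving_snd.ae h))

theorem ae_eventually_mem_separatedPairs_iff {μ : Measure V} {α : ℝ} {A : ℕ → Set V}
    {F : Set V}
    (hAF : ∀ᵐ x ∂μ, ∀ᶠ n in atTop, (x ∈ A n ↔ x ∈ F)) :
    ∀ᵐ p ∂gagliardoMeasure μ α,
      ∀ᶠ n in atTop, (p ∈ separatedPairs (A n) ↔ p ∈ separatedPairs F) := by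
  filter_upwards [ae_gagliardoMeasure_fst_snd hAF] with p ⟨hp₁, hp₂⟩
  filter_upwards [hp₁, hp₂] with n hn₁ hn₂
  simp only [separatedPairs, Set.mem_symmDiff, Set.mem_preimage, hn₁, hn₂]

variable [FiniteDimensional ℝ V] [BorelSpace V] (μ : Measure V) [μ.IsAddHaarMeasure] (α : ℝ)

theorem gagliardoMeasure_preimage_smul {c : ℝ} (hc : 0 < c) {S : Set (V × V)}
    (hS : MeasurableSet S) :
    gagliardoMeasure μ α ((c • ·) ⁻¹' S) =
      ENNReal.ofReal (c ^ (α - finrank ℝ V)) * gagliardoMeasure μ α S := by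
  have hker : ∀ p : V × V, fracKernel α (p.1 - p.2) =
      ENNReal.ofReal (c ^ ((finrank ℝ V : ℝ) + α)) *
        fracKernel α ((c • p).1 - (c • p).2) := fun p => by
    rw [Prod.smul_fst, Prod.smul_snd, ← smul_sub, fracKernel_smul α hc, ← mul_assoc,
      ← ENNReal.ofReal_mul (by positivity), ← Real.rpow_add hc, add_neg_cancel, Real.rpow_zero,
      ENNReal.ofReal_one, one_mul]
  rw [gagliardoMeasure, withDensity_apply _ (measurable_const_smul c hS), withDensity_apply _ hS]
  rw [lintegral_congr hker, lintegral_const_mul _ (by fun_prop),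
    setLIntegral_preimage_smul (μ.prod μ) hc S fun p => fracKernel α (p.1 - p.2), ← mul_assoc,
    ← ENNReal.ofReal_mul (by positivity), ← Real.rpow_add hc, finrank_prod]
  congr 3
  push_cast
  ring

theorem measurePreserving_gagliardoMeasure_add (v : V) :
    MeasurePreserving (· + (v, v)) (gagliardoMeasure μ α) (gagliardoMeasure μ α) :=
  measurePreserving_withDensity_of_comp_eq (measurePreserving_add_right (μ.prod μ) (v, v))
    (by fun_prop) fun p => by simp

theorem measurePreserving_gagliardoMeasure_swap :
    MeasurePreserving Prod.swap (gagliardoMeasure μ α) (gagliardoMeasure μ α) :=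
  measurePreserving_withDensity_of_comp_eq Measure.measurePreserving_swap
    (by fun_prop) fun p => fracKernel_sub_comm α _ _

theorem gagliardoMeasure_prod_compl {E : Set V} (hE : MeasurableSet E) :
    gagliardoMeasure μ α (E ×ˢ Eᶜ) = fracPerimeter μ α E := by
  rw [gagliardoMeasure, withDensity_apply _ (hE.prod hE.compl), ← Measure.prod_restrict,
    lintegral_prod _ (by fun_prop), fracPerimeter]

theorem gagliardoMeasure_separatedPairs {E : Set V} (hE : MeasurableSet E) :
    gagliardoMeasure μ α (separatedPairs E) = 2 * fracPerimeter μ α E := by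
  have hmeas : MeasurableSet (E ×ˢ Eᶜ) := hE.prod hE.compl
  have hdisj : Disjoint (E ×ˢ Eᶜ) (Prod.swap ⁻¹' (E ×ˢ Eᶜ)) :=
    Set.disjoint_left.2 fun _ hp hp' => hp.2 hp'.1
  rw [separatedPairs_eq_union, measure_union hdisj (measurable_swap hmeas),
    (measurePreserving_gagliardoMeasure_swap μ α).measure_preimage hmeas.nullMeasurableSet,
    gagliardoMeasure_prod_compl μ α hE, two_mul]

variable {μ α}

theorem fracPerimeter_preimage_smul {c : ℝ} (hc : 0 < c) {E : Set V} (hE : MeasurableSet E) :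
    fracPerimeter μ α ((c • ·) ⁻¹' E) =
      ENNReal.ofReal (c ^ (α - finrank ℝ V)) * fracPerimeter μ α E := by
  rw [← gagliardoMeasure_prod_compl μ α hE,
    ← gagliardoMeasure_prod_compl μ α (measurable_const_smul c hE),
    ← gagliardoMeasure_preimage_smul μ α hc (hE.prod hE.compl)]
  rfl

theorem fracPerimeter_preimage_add {E : Set V} (hE : MeasurableSet E) (v : V) :
    fracPerimeter μ α ((· + v) ⁻¹' E) = fracPerimeter μ α E := by
  rw [← gagliardoMeasure_prod_compl μ α hE,
    ← gagliardoMeasure_prod_compl μ α (measurable_add_const v hE),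
    ← (measurePreserving_gagliardoMeasure_add μ α v).measure_preimage
      (hE.prod hE.compl).nullMeasurableSet]
  rfl

theorem fracPerimeter_symmDiff_add_le {A E : Set V} (hA : MeasurableSet A) (hE : MeasurableSet E) :
    fracPerimeter μ α E + fracPerimeter μ α (A ∆ E) ≤
      fracPerimeter μ α A + gagliardoMeasure μ α (separatedPairs E \ separatedPairs A) := by
  have h := measure_add_measure_symmDiff_le (μ := gagliardoMeasure μ α) (separatedPairs A)
    (measurableSet_separatedPairs hE)
  rw [← separatedPairs_symmDiff, gagliardoMeasure_separatedPairs μ α hA,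
    gagliardoMeasure_separatedPairs μ α hE, gagliardoMeasure_separatedPairs μ α (hA.symmDiff hE),
    ← mul_add, ← mul_add] at h
  exact (ENNReal.mul_le_mul_iff_right two_ne_zero ofNat_ne_top).1 h

theorem fracPerimeter_le_add_symmDiff {A E : Set V} (hA : MeasurableSet A)
    (hE : MeasurableSet E) :
    fracPerimeter μ α A ≤ fracPerimeter μ α E + fracPerimeter μ α (A ∆ E) := by
  have h : gagliardoMeasure μ α (separatedPairs A) ≤
      gagliardoMeasure μ α (separatedPairs E) + gagliardoMeasure μ α (separatedPairs (A ∆ E)) := by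
    rw [separatedPairs_symmDiff]
    refine (measure_mono ?_).trans (measure_union_le _ _)
    exact fun p hp => or_iff_not_imp_left.2 fun hpE => Or.inl ⟨hp, hpE⟩
  rw [gagliardoMeasure_separatedPairs μ α hA, gagliardoMeasure_separatedPairs μ α hE,
    gagliardoMeasure_separatedPairs μ α (hA.symmDiff hE), ← mul_add] at h
  exact (ENNReal.mul_le_mul_iff_right two_ne_zero ofNat_ne_top).1 h

theorem fracPerimeter_le_liminf {A : ℕ → Set V} {F : Set V} (hA : ∀ n, MeasurableSet (A n))
    (hF : MeasurableSet F) (hAF : ∀ᵐ x ∂μ, ∀ᶠ n in atTop, (x ∈ A n ↔ x ∈ F)) :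
    fracPerimeter μ α F ≤ liminf (fun n => fracPerimeter μ α (A n)) atTop := by
  rw [← gagliardoMeasure_prod_compl μ α hF]
  simp_rw [← gagliardoMeasure_prod_compl μ α (hA _)]
  refine measure_le_liminf_of_ae_eventually_mem ?_
  filter_upwards [ae_gagliardoMeasure_fst_snd hAF] with p ⟨hp₁, hp₂⟩ hp
  filter_upwards [hp₁, hp₂] with n hn₁ hn₂
  exact ⟨hn₁.2 hp.1, fun h => hp.2 (hn₂.1 h)⟩

theorem tendsto_gagliardoMeasure_separatedPairs_sdiff {A : ℕ → Set V} {F : Set V}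
    (hA : ∀ n, MeasurableSet (A n)) (hF : MeasurableSet F)
    (hAF : ∀ᵐ x ∂μ, ∀ᶠ n in atTop, (x ∈ A n ↔ x ∈ F)) (hfin : fracPerimeter μ α F ≠ ∞) :
    Tendsto (fun n => gagliardoMeasure μ α (separatedPairs F \ separatedPairs (A n)))
      atTop (𝓝 0) := by
  have hmeas := measurableSet_separatedPairs hF
  have hfin' : gagliardoMeasure μ α (separatedPairs F) ≠ ∞ := by
    rw [gagliardoMeasure_separatedPairs μ α hF]
    exact mul_ne_top ofNat_ne_top hfin
  rw [← measure_empty (μ := gagliardoMeasure μ α)]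
  refine tendsto_measure_of_ae_tendsto_indicator atTop MeasurableSet.empty
    (fun n => hmeas.diff (measurableSet_separatedPairs (hA n))) hmeas hfin'
    (Eventually.of_forall fun n => Set.sdiff_subset) ?_
  filter_upwards [ae_eventually_mem_separatedPairs_iff hAF] with p hp
  filter_upwards [hp] with n hn
  simp [hn]

end GagliardoMeasure

section Estimates

open Metric

theorem exists_pos_ofReal_rpow_mul_lt {θ : ℝ} (hθ : 0 < θ) {K δ : ℝ≥0∞} (hK : K ≠ ∞)
    (hδ : 0 < δ) : ∃ r : ℝ, 0 < r ∧ ENNReal.ofReal (r ^ θ) * K < δ := by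
  have hrpow : Tendsto (fun r : ℝ => r ^ θ) (𝓝[>] 0) (𝓝 0) := by
    simpa [Real.zero_rpow hθ.ne'] using
      (Real.continuousAt_rpow_const 0 θ (Or.inr hθ.le)).tendsto.mono_left nhdsWithin_le_nhds
  have hmul : Tendsto (fun r : ℝ => ENNReal.ofReal (r ^ θ) * K) (𝓝[>] 0) (𝓝 0) := by
    simpa using ENNReal.Tendsto.mul_const (ENNReal.tendsto_ofReal hrpow) (Or.inr hK)
  exact (eventually_mem_nhdsWithin.and (hmul.eventually_lt_const hδ)).exists

section UnitBall

variable {V : Type*} [NormedAddCommGroup V] [MeasurableSpace V] {μ : Measure V}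

theorem half_measure_unitBall_ne_zero [μ.IsOpenPosMeasure] : μ (ball (0 : V) 1) / 2 ≠ 0 :=
  (ENNReal.div_pos (measure_ball_pos μ _ one_pos).ne' ofNat_ne_top).ne'

theorem half_measure_unitBall_ne_top [ProperSpace V] [IsFiniteMeasureOnCompacts μ] :
    μ (ball (0 : V) 1) / 2 ≠ ∞ :=
  (ENNReal.div_lt_top measure_ball_lt_top.ne two_ne_zero).ne

end UnitBall

variable {V : Type*} [NormedAddCommGroup V] [NormedSpace ℝ V]

theorem fracKernel_le_of_norm_le {s t r : ℝ} (hs : 0 < s) (hst : s ≤ t) {z : V} (hz : ‖z‖ ≤ r) :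
    fracKernel s z ≤ ENNReal.ofReal (r ^ (t - s)) * fracKernel t z := by
  have hr : 0 ≤ r := (norm_nonneg z).trans hz
  rw [fracKernel, fracKernel, ← ENNReal.ofReal_mul (by positivity)]
  refine ENNReal.ofReal_le_ofReal ?_
  rcases (norm_nonneg z).eq_or_lt with hz0 | hz0
  · rw [← hz0, Real.zero_rpow (by linarith [(finrank ℝ V).cast_nonneg (α := ℝ)])]
    positivity
  · calc ‖z‖ ^ (-((finrank ℝ V : ℝ) + s))
        = ‖z‖ ^ (t - s) * ‖z‖ ^ (-((finrank ℝ V : ℝ) + t)) := by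
          rw [← Real.rpow_add hz0]
          ring_nf
      _ ≤ r ^ (t - s) * ‖z‖ ^ (-((finrank ℝ V : ℝ) + t)) := by
          gcongr

variable [MeasurableSpace V]

theorem fracPerimeter_of_measure_zero {μ : Measure V} {α : ℝ} {E : Set V} (hE : μ E = 0) :
    fracPerimeter μ α E = 0 :=
  setLIntegral_measure_zero _ _ hE

/-- The mass of the kernel `|z|^{-(d+α)}` outside the unit ball. -/
noncomputable def kernelTail (μ : Measure V) (α : ℝ) : ℝ≥0∞ :=
  ∫⁻ z in (ball 0 1)ᶜ, fracKernel α z ∂μ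

variable [FiniteDimensional ℝ V] [BorelSpace V] {μ : Measure V} [μ.IsAddHaarMeasure] {α : ℝ}

theorem kernelTail_lt_top (hα : 0 < α) : kernelTail μ α < ∞ := by
  set p : ℝ := (finrank ℝ V : ℝ) + α with hp
  have hp0 : 0 < p := by positivity
  have hint : Integrable (fun z : V => 2 ^ p * (1 + ‖z‖) ^ (-p)) μ :=
    (integrable_one_add_norm (by simpa [hp] using hα)).const_mul _
  refine lt_of_le_of_lt ?_ hint.lintegral_lt_top
  refine (setLIntegral_mono' measurableSet_ball.compl fun z hz => ?_).trans
    (setLIntegral_le_lintegral _ _)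
  have hz1 : 1 ≤ ‖z‖ := by simpa using hz
  refine ENNReal.ofReal_le_ofReal ?_
  calc ‖z‖ ^ (-p) ≤ ((1 + ‖z‖) / 2) ^ (-p) :=
        Real.rpow_le_rpow_of_nonpos (by positivity) (by linarith) (neg_nonpos.2 hp0.le)
    _ = 2 ^ p * (1 + ‖z‖) ^ (-p) := by
        rw [Real.div_rpow (by positivity) zero_le_two, Real.rpow_neg zero_le_two, div_inv_eq_mul,
          mul_comm]

theorem setLIntegral_compl_ball_fracKernel_sub {r : ℝ} (hr : 0 < r) (x : V) :
    ∫⁻ y in (ball x r)ᶜ, fracKernel α (x - y) ∂μ =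
      ENNReal.ofReal (r ^ (-α)) * kernelTail μ α := by
  have htranslate : ∫⁻ y in (ball x r)ᶜ, fracKernel α (x - y) ∂μ =
      ∫⁻ z in (ball (0 : V) r)ᶜ, fracKernel α z ∂μ := by
    rw [← (Measure.measurePreserving_sub_left μ x).setLIntegral_comp_preimage
      measurableSet_ball.compl (measurable_fracKernel α)]
    congr 2
    ext y
    simp [dist_eq_norm, norm_sub_rev]
  have hball : (r⁻¹ • · : V → V) ⁻¹' (ball 0 1)ᶜ = (ball 0 r)ᶜ := by
    ext z
    simp [norm_smul, abs_of_pos hr, inv_mul_eq_div, one_le_div hr]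
  have hker : ∀ z : V, fracKernel α z =
      ENNReal.ofReal (r ^ (-((finrank ℝ V : ℝ) + α))) * fracKernel α (r⁻¹ • z) := fun z => by
    rw [← fracKernel_smul α hr, smul_inv_smul₀ hr.ne']
  rw [htranslate, ← hball, lintegral_congr hker, lintegral_const_mul _ (by fun_prop),
    setLIntegral_preimage_smul μ (inv_pos.2 hr), ← mul_assoc, ← ENNReal.ofReal_mul (by positivity),
    Real.inv_rpow hr.le, ← Real.rpow_neg hr.le, ← Real.rpow_add hr, kernelTail]
  congr 3
  ring

theorem fracPerimeter_le_interpolation {s t r : ℝ} (hs : 0 < s) (hst : s ≤ t) (hr : 0 < r)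
    (E : Set V) :
    fracPerimeter μ s E ≤ ENNReal.ofReal (r ^ (t - s)) * fracPerimeter μ t E +
      ENNReal.ofReal (r ^ (-s)) * kernelTail μ s * μ E := by
  have hpoint : ∀ x, ∫⁻ y in Eᶜ, fracKernel s (x - y) ∂μ ≤
      ENNReal.ofReal (r ^ (t - s)) * ∫⁻ y in Eᶜ, fracKernel t (x - y) ∂μ +
        ENNReal.ofReal (r ^ (-s)) * kernelTail μ s := fun x => by
    rw [← setLIntegral_compl_ball_fracKernel_sub hr x, ← lintegral_const_mul _ (by fun_prop),
      ← lintegral_indicator measurableSet_ball.compl]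
    refine le_trans ?_ (add_le_add_right (setLIntegral_le_lintegral Eᶜ _) _)
    rw [← lintegral_add_left (by fun_prop)]
    refine lintegral_mono fun y => ?_
    by_cases hy : y ∈ ball x r
    · refine (fracKernel_le_of_norm_le hs hst ?_).trans le_self_add
      exact (dist_eq_norm x y ▸ mem_ball'.1 hy).le
    · rw [Set.indicator_of_mem (Set.mem_compl hy)]
      exact le_add_self
  calc fracPerimeter μ s E
      ≤ ∫⁻ x in E, (ENNReal.ofReal (r ^ (t - s)) * (∫⁻ y in Eᶜ, fracKernel t (x - y) ∂μ) +
          ENNReal.ofReal (r ^ (-s)) * kernelTail μ s) ∂μ := lintegral_mono hpoint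
    _ = _ := by
        rw [lintegral_add_right _ measurable_const, lintegral_const_mul _ (by fun_prop),
          setLIntegral_const, fracPerimeter]

theorem fracPerimeter_ne_top_of_le {s t : ℝ} (hs : 0 < s) (hst : s ≤ t) {E : Set V}
    (hμE : μ E ≠ ∞) (ht : fracPerimeter μ t E ≠ ∞) : fracPerimeter μ s E ≠ ∞ :=
  ne_top_of_le_ne_top
    (add_ne_top.2 ⟨mul_ne_top ofReal_ne_top ht,
      mul_ne_top (mul_ne_top ofReal_ne_top (kernelTail_lt_top hs).ne) hμE⟩)
    (fracPerimeter_le_interpolation hs hst one_pos E)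

theorem ofReal_rpow_mul_measure_ball {r : ℝ} (hr : 0 < r) (x : V) :
    ENNReal.ofReal (r ^ (-((finrank ℝ V : ℝ) + α))) * μ (ball x r) =
      ENNReal.ofReal (r ^ (-α)) * μ (ball 0 1) := by
  rw [Measure.addHaar_ball_of_pos μ x hr, ← mul_assoc, ← ENNReal.ofReal_mul (by positivity),
    ← Real.rpow_natCast, ← Real.rpow_add hr]
  congr 3
  ring

theorem mul_measure_le_fracPerimeter {r : ℝ} (hα : 0 ≤ α) (hr : 0 < r) {E : Set V}
    (hE : MeasurableSet E) (h : ∀ x, μ (E ∩ ball x r) ≤ μ (ball x r) / 2) :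
    ENNReal.ofReal (r ^ (-α)) * (μ (ball 0 1) / 2) * μ E ≤ fracPerimeter μ α E := by
  rw [fracPerimeter, ← setLIntegral_const]
  refine setLIntegral_mono' hE fun x hx => ?_
  calc ENNReal.ofReal (r ^ (-α)) * (μ (ball 0 1) / 2)
      = ENNReal.ofReal (r ^ (-((finrank ℝ V : ℝ) + α))) * (μ (ball x r) / 2) := by
        rw [← mul_div_assoc, ← mul_div_assoc, ofReal_rpow_mul_measure_ball hr]
    _ ≤ ENNReal.ofReal (r ^ (-((finrank ℝ V : ℝ) + α))) * μ (Eᶜ ∩ ball x r) := by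
        gcongr
        exact half_measure_le_measure_compl_inter hE measure_ball_lt_top.ne (h x)
    _ = ∫⁻ _ in Eᶜ ∩ ball x r, ENNReal.ofReal (r ^ (-((finrank ℝ V : ℝ) + α))) ∂μ :=
        (setLIntegral_const _ _).symm
    _ ≤ ∫⁻ y in Eᶜ ∩ ball x r, fracKernel α (x - y) ∂μ := by
        refine setLIntegral_mono' (hE.compl.inter measurableSet_ball) fun y ⟨hyE, hyx⟩ => ?_
        refine ofReal_rpow_le_fracKernel hα (sub_ne_zero.2 fun hxy => hyE (hxy ▸ hx)) ?_
        exact (dist_eq_norm x y ▸ mem_ball'.1 hyx).le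
    _ ≤ ∫⁻ y in Eᶜ, fracKernel α (x - y) ∂μ := lintegral_mono_set Set.inter_subset_left

theorem fracPerimeter_isoperimetric [Nontrivial V] (hα : 0 ≤ α) {E : Set V}
    (hE : MeasurableSet E) (hμ0 : μ E ≠ 0) (hμE : μ E ≠ ∞) :
    (μ (ball (0 : V) 1) / 2) ^ (1 + α / finrank ℝ V) * μ E ^ (1 - α / finrank ℝ V) ≤
      fracPerimeter μ α E := by
  have hd : (0 : ℝ) < finrank ℝ V := Nat.cast_pos.2 finrank_pos
  set ω : ℝ≥0∞ := μ (ball (0 : V) 1) / 2 with hω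
  have hω0 : ω ≠ 0 := half_measure_unitBall_ne_zero
  have hωtop : ω ≠ ∞ := half_measure_unitBall_ne_top
  have hqtop : μ E / ω ≠ ∞ := (ENNReal.div_lt_top hμE hω0).ne
  have hq : 0 < (μ E / ω).toReal := toReal_pos (ENNReal.div_pos hμ0 hωtop).ne' hqtop
  -- A ball of radius `r` has volume `2 μ E`, so `E` fills at most half of it.
  set r : ℝ := (μ E / ω).toReal ^ (finrank ℝ V : ℝ)⁻¹ with hr
  have hr_rpow : ∀ p : ℝ, ENNReal.ofReal (r ^ p) = (μ E / ω) ^ (p / finrank ℝ V) := fun p => by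
    rw [hr, ← Real.rpow_mul hq.le, inv_mul_eq_div, ← ENNReal.ofReal_rpow_of_pos hq,
      ofReal_toReal hqtop]
  have hhalf : ∀ x, μ (E ∩ ball x r) ≤ μ (ball x r) / 2 := fun x => by
    rw [Measure.addHaar_ball_of_pos μ x (by positivity), ← Real.rpow_natCast, hr_rpow,
      div_self hd.ne', ENNReal.rpow_one, mul_div_assoc, ← hω, ENNReal.div_mul_cancel hω0 hωtop]
    exact measure_mono Set.inter_subset_left
  refine le_of_eq_of_le ?_ (mul_measure_le_fracPerimeter hα (by positivity) hE hhalf)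
  have ha : 0 ≤ α / finrank ℝ V := by positivity
  rw [← hω, hr_rpow, neg_div, ENNReal.rpow_neg, ENNReal.div_rpow_of_nonneg _ _ ha,
    ENNReal.inv_div (Or.inl (rpow_ne_top_of_nonneg ha hωtop))
      (Or.inl (rpow_pos hω0.bot_lt hωtop).ne'),
    ENNReal.rpow_add _ _ hω0 hωtop, ENNReal.rpow_sub _ _ hμ0 hμE, ENNReal.rpow_one,
    ENNReal.rpow_one]
  simp only [div_eq_mul_inv]
  ring

theorem fracPerimeter_pos [Nontrivial V] (hα : 0 ≤ α) {E : Set V} (hE : MeasurableSet E)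
    (hμ0 : μ E ≠ 0) (hμE : μ E ≠ ∞) : 0 < fracPerimeter μ α E := by
  refine lt_of_lt_of_le (ENNReal.mul_pos ?_ ?_) (fracPerimeter_isoperimetric hα hE hμ0 hμE)
  · exact (rpow_pos half_measure_unitBall_ne_zero.bot_lt half_measure_unitBall_ne_top).ne'
  · exact (rpow_pos hμ0.bot_lt hμE).ne'

theorem exists_forall_measure_le_of_fracPerimeter_le (μ : Measure V) [μ.IsAddHaarMeasure]
    (hα : 0 ≤ α) (hαd : α < finrank ℝ V) {C : ℝ≥0∞} (hC : C ≠ ∞) :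
    ∃ M ≠ ∞, ∀ E, MeasurableSet E → μ E ≠ ∞ → fracPerimeter μ α E ≤ C → μ E ≤ M := by
  have hd : (0 : ℝ) < finrank ℝ V := hα.trans_lt hαd
  have : Nontrivial V := finrank_pos_iff.1 (Nat.cast_pos.1 hd)
  have hexp : 0 < 1 - α / finrank ℝ V := sub_pos.2 ((div_lt_one hd).2 hαd)
  set c : ℝ≥0∞ := (μ (ball (0 : V) 1) / 2) ^ (1 + α / finrank ℝ V)
  have hc0 : c ≠ 0 :=
    (rpow_pos half_measure_unitBall_ne_zero.bot_lt half_measure_unitBall_ne_top).ne'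
  have hctop : c ≠ ∞ := rpow_ne_top_of_nonneg (by positivity) half_measure_unitBall_ne_top
  refine ⟨(C / c) ^ (1 - α / finrank ℝ V)⁻¹,
    rpow_ne_top_of_nonneg (inv_nonneg.2 hexp.le) (ENNReal.div_lt_top hC hc0).ne,
    fun E hE hμE hPE => ?_⟩
  rcases eq_or_ne (μ E) 0 with hμ0 | hμ0
  · exact hμ0 ▸ zero_le
  rw [ENNReal.le_rpow_inv_iff hexp, ENNReal.le_div_iff_mul_le (Or.inl hc0) (Or.inl hctop),
    mul_comm]
  exact (fracPerimeter_isoperimetric hα hE hμ0 hμE).trans hPE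

theorem exists_forall_half_measure_ball_lt (μ : Measure V) [μ.IsAddHaarMeasure] {s t : ℝ}
    (hs : 0 < s) (hst : s < t) {c C : ℝ≥0∞} (hc : 0 < c) (hC : C ≠ ∞) :
    ∃ r : ℝ, 0 < r ∧ ∀ E, MeasurableSet E → c ≤ fracPerimeter μ s E → fracPerimeter μ t E ≤ C →
      ∃ x, μ (ball x r) / 2 < μ (E ∩ ball x r) := by
  set ω : ℝ≥0∞ := μ (ball (0 : V) 1) / 2
  have hω0 : ω ≠ 0 := half_measure_unitBall_ne_zero
  have hωtop : ω ≠ ∞ := half_measure_unitBall_ne_top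
  obtain ⟨r, hr, hrc⟩ := exists_pos_ofReal_rpow_mul_lt (sub_pos.2 hst)
    (K := C + kernelTail μ s * (C / ω)) (add_ne_top.2 ⟨hC, mul_ne_top (kernelTail_lt_top hs).ne
      (ENNReal.div_lt_top hC hω0).ne⟩) hc
  refine ⟨r, hr, fun E hE hsE htE => ?_⟩
  by_contra! hhalf
  have hμE : ENNReal.ofReal (r ^ (-t)) * μ E ≤ C / ω := by
    rw [ENNReal.le_div_iff_mul_le (Or.inl hω0) (Or.inl hωtop), mul_right_comm]
    exact (mul_measure_le_fracPerimeter (hs.trans hst).le hr hE hhalf).trans htE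
  refine (hsE.trans (fracPerimeter_le_interpolation hs hst.le hr E)).not_gt (lt_of_le_of_lt ?_ hrc)
  have hrpow : r ^ (-s) = r ^ (t - s) * r ^ (-t) := by
    rw [← Real.rpow_add hr]
    ring_nf
  calc ENNReal.ofReal (r ^ (t - s)) * fracPerimeter μ t E +
        ENNReal.ofReal (r ^ (-s)) * kernelTail μ s * μ E
      = ENNReal.ofReal (r ^ (t - s)) *
          (fracPerimeter μ t E + kernelTail μ s * (ENNReal.ofReal (r ^ (-t)) * μ E)) := by
        rw [hrpow, ENNReal.ofReal_mul (by positivity)]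
        ring
    _ ≤ ENNReal.ofReal (r ^ (t - s)) * (C + kernelTail μ s * (C / ω)) := by gcongr

theorem integrableOn_one_sub_rpow_neg {t : ℝ} (ht : t < 1) :
    IntegrableOn (fun y : ℝ => (1 - y) ^ (-t)) (Set.Ioo 0 1) := by
  have h : IntervalIntegrable (fun y : ℝ => y ^ (-t)) volume 0 1 :=
    intervalIntegral.intervalIntegrable_rpow' (by linarith)
  rw [← intervalIntegrable_iff_integrableOn_Ioo_of_le zero_le_one]
  simpa using (h.comp_sub_left 1).symm

theorem setLIntegral_ball_one_sub_norm_rpow_neg_lt_top [Nontrivial V] (μ : Measure V)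
    [μ.IsAddHaarMeasure] {t : ℝ} (ht : t < 1) :
    ∫⁻ x in ball (0 : V) 1, ENNReal.ofReal ((1 - ‖x‖) ^ (-t)) ∂μ < ∞ := by
  suffices IntegrableOn (fun x : V => (1 - ‖x‖) ^ (-t)) (ball 0 1) μ from this.lintegral_lt_top
  refine (integrableOn_fun_norm_addHaar μ (f := fun y : ℝ => (1 - y) ^ (-t))).2 ?_
  refine Integrable.mono (integrableOn_one_sub_rpow_neg ht) (by fun_prop) ?_
  filter_upwards [ae_restrict_mem measurableSet_Ioo] with y hy
  rw [norm_smul, norm_pow, Real.norm_of_nonneg hy.1.le]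
  exact mul_le_of_le_one_left (norm_nonneg _) (pow_le_one₀ hy.1.le hy.2.le)

theorem fracPerimeter_unitBall_lt_top [Nontrivial V] (μ : Measure V) [μ.IsAddHaarMeasure] {t : ℝ}
    (ht0 : 0 < t) (ht1 : t < 1) : fracPerimeter μ t (ball (0 : V) 1) < ∞ := by
  have hpoint : ∀ x ∈ ball (0 : V) 1, ∫⁻ y in (ball (0 : V) 1)ᶜ, fracKernel t (x - y) ∂μ ≤
      ENNReal.ofReal ((1 - ‖x‖) ^ (-t)) * kernelTail μ t := fun x hx => by
    have hx1 : 0 < 1 - ‖x‖ := sub_pos.2 (mem_ball_zero_iff.1 hx)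
    rw [← setLIntegral_compl_ball_fracKernel_sub hx1 x]
    refine lintegral_mono_set (Set.compl_subset_compl.2 (ball_subset_ball' ?_))
    simp
  refine (setLIntegral_mono' measurableSet_ball hpoint).trans_lt ?_
  rw [lintegral_mul_const' _ _ (kernelTail_lt_top ht0).ne]
  exact mul_lt_top (setLIntegral_ball_one_sub_norm_rpow_neg_lt_top μ ht1) (kernelTail_lt_top ht0)

end Estimates

section AlmostEverywhereConvergence

variable {X : Type*} [MeasurableSpace X] {ν : Measure X}

theorem cauchySeq_toLp_one_of_dominated_of_ae_tendsto {g : ℕ → X → ℝ}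
    (hg : ∀ n, MemLp (g n) 1 ν) {b : X → ℝ} (hb : Integrable b ν)
    (hgb : ∀ n, ∀ᵐ x ∂ν, ‖g n x‖ ≤ b x)
    (hlim : ∀ᵐ x ∂ν, ∃ l, Tendsto (fun n => g n x) atTop (𝓝 l)) :
    CauchySeq fun n => (hg n).toLp := by
  obtain ⟨G, hG, hgG⟩ := measurable_limit_of_tendsto_metrizable_ae
    (fun n => (hg n).aestronglyMeasurable.aemeasurable) hlim
  have hG_mem : MemLp G 1 ν := memLp_one_iff_integrable.2 ⟨hG.aestronglyMeasurable,
    hasFiniteIntegral_of_dominated_convergence hb.hasFiniteIntegral hgb hgG⟩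
  refine Tendsto.cauchySeq ((Lp.tendsto_Lp_iff_tendsto_eLpNorm'' g hg G hG_mem).2 ?_)
  simpa only [eLpNorm_one_eq_lintegral_enorm, Pi.sub_apply, ofReal_norm] using
    tendsto_lintegral_norm_of_dominated_convergence (fun n => (hg n).aestronglyMeasurable)
      hb.hasFiniteIntegral hgb hgG

theorem exists_subseq_ae_tendsto_of_cauchySeq {p : ℝ≥0∞} [Fact (1 ≤ p)] {f : ℕ → X → ℝ}
    (hf : ∀ n, MemLp (f n) p ν) (hcauchy : CauchySeq fun n => (hf n).toLp) :
    ∃ φ : ℕ → ℕ, StrictMono φ ∧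
      ∀ᵐ x ∂ν, ∃ l, Tendsto (fun n => f (φ n) x) atTop (𝓝 l) := by
  obtain ⟨g, hg⟩ := cauchySeq_tendsto_of_complete hcauchy
  obtain ⟨φ, hφ, hlim⟩ := (tendstoInMeasure_of_tendsto_Lp hg).exists_seq_tendsto_ae
  refine ⟨φ, hφ, ?_⟩
  filter_upwards [hlim, ae_all_iff.2 fun n => (hf n).coeFn_toLp] with x hx hfx
  exact ⟨g x, by simpa only [hfx] using hx⟩

end AlmostEverywhereConvergence

section BallDensity

open Metric

variable {X : Type*} [PseudoMetricSpace X] [MeasurableSpace X]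

/-- The proportion of the ball of radius `r` around `x` that is filled by `E`; as a function of `x`,
the mollification of the indicator of `E` at scale `r`. -/
noncomputable def ballDensity (μ : Measure X) (r : ℝ) (E : Set X) (x : X) : ℝ :=
  μ.real (E ∩ ball x r) / μ.real (ball x r)

theorem ballDensity_mem_Icc [ProperSpace X] {μ : Measure X} [IsFiniteMeasureOnCompacts μ] (r : ℝ)
    (E : Set X) (x : X) : ballDensity μ r E x ∈ Set.Icc (0 : ℝ) 1 :=
  ⟨by unfold ballDensity; positivity, div_le_one_of_le₀
    (measureReal_mono Set.inter_subset_right measure_ball_lt_top.ne) measureReal_nonneg⟩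

theorem measurable_ballDensity [OpensMeasurableSpace X] [SecondCountableTopology X] (μ : Measure X)
    [SFinite μ] (r : ℝ) {E : Set X} (hE : MeasurableSet E) : Measurable (ballDensity μ r E) := by
  have hball : ∀ {S : Set X}, MeasurableSet S → Measurable fun x => μ.real (S ∩ ball x r) :=
    fun hS => (measurable_measure_prodMk_left ((measurable_snd hS).inter
      (measurableSet_lt (measurable_snd.dist measurable_fst) measurable_const))).ennreal_toReal
  have hdiv := (hball hE).div (hball .univ)
  simp only [Set.univ_inter] at hdiv
  exact hdiv

theorem enorm_indicator_sub_ballDensity [ProperSpace X] [OpensMeasurableSpace X] {μ : Measure X}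
    [IsFiniteMeasureOnCompacts μ] [μ.IsOpenPosMeasure] {r : ℝ} (hr : 0 < r) {E : Set X}
    (hE : MeasurableSet E) (x : X) :
    ‖E.indicator (fun _ => (1 : ℝ)) x - ballDensity μ r E x‖ₑ =
      μ {y ∈ ball x r | (x, y) ∈ separatedPairs E} / μ (ball x r) := by
  have hball0 : μ (ball x r) ≠ 0 := (measure_ball_pos μ x hr).ne'
  have hball : μ (ball x r) ≠ ∞ := measure_ball_lt_top.ne
  have henorm : ∀ S : Set X, ‖ballDensity μ r S x‖ₑ = μ (S ∩ ball x r) / μ (ball x r) := fun S => by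
    rw [Real.enorm_of_nonneg (ballDensity_mem_Icc r S x).1, ballDensity, measureReal_def,
      measureReal_def, ← toReal_div, ofReal_toReal]
    exact (ENNReal.div_lt_top (measure_ne_top_of_subset Set.inter_subset_right hball) hball0).ne
  by_cases hx : x ∈ E
  · have hcompl : 1 - ballDensity μ r E x = ballDensity μ r Eᶜ x := by
      have hreal : μ.real (ball x r) ≠ 0 := toReal_ne_zero.2 ⟨hball0, hball⟩
      have hsum := measureReal_inter_add_sdiff (μ := μ) (s := ball x r) hE hball
      rw [ballDensity, ballDensity, one_sub_div hreal, Set.inter_comm E, Set.inter_comm Eᶜ,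
        ← Set.sdiff_eq, ← eq_sub_of_add_eq' hsum]
    rw [Set.indicator_of_mem hx, hcompl, henorm]
    congr 2
    ext y
    simp [separatedPairs, Set.mem_symmDiff, hx, and_comm]
  · rw [Set.indicator_of_notMem hx, zero_sub, enorm_neg, henorm]
    congr 2
    ext y
    simp [separatedPairs, Set.mem_symmDiff, hx, and_comm]

end BallDensity

section Compactness

open Metric

variable {V : Type*} [NormedAddCommGroup V] [NormedSpace ℝ V] [FiniteDimensional ℝ V]
  [MeasurableSpace V] [BorelSpace V] {μ : Measure V} [μ.IsAddHaarMeasure] {α : ℝ}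

theorem lintegral_measure_ball_separatedPairs_le {r : ℝ} (hα : 0 ≤ α) {E : Set V}
    (hE : MeasurableSet E) :
    ENNReal.ofReal (r ^ (-((finrank ℝ V : ℝ) + α))) *
      ∫⁻ x, μ {y ∈ ball x r | (x, y) ∈ separatedPairs E} ∂μ ≤ 2 * fracPerimeter μ α E := by
  set S : Set (V × V) := {p | p.2 ∈ ball p.1 r} ∩ separatedPairs E
  have hS : MeasurableSet S :=
    (measurableSet_lt (measurable_snd.dist measurable_fst) measurable_const).inter
      (measurableSet_separatedPairs hE)
  calc _ = ENNReal.ofReal (r ^ (-((finrank ℝ V : ℝ) + α))) * μ.prod μ S := by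
        rw [Measure.prod_apply hS]
        rfl
    _ = ∫⁻ _ in S, ENNReal.ofReal (r ^ (-((finrank ℝ V : ℝ) + α))) ∂μ.prod μ :=
        (setLIntegral_const _ _).symm
    _ ≤ gagliardoMeasure μ α S := by
        rw [gagliardoMeasure, withDensity_apply _ hS]
        refine setLIntegral_mono' hS fun p ⟨hball, hsep⟩ => ?_
        refine ofReal_rpow_le_fracKernel hα (sub_ne_zero.2 fun heq => ?_) ?_
        · simp [separatedPairs, Set.mem_symmDiff, heq] at hsep
        · exact (dist_eq_norm p.1 p.2 ▸ mem_ball'.1 hball).le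
    _ ≤ 2 * fracPerimeter μ α E := by
        rw [← gagliardoMeasure_separatedPairs μ α hE]
        exact measure_mono Set.inter_subset_right

theorem lintegral_enorm_indicator_sub_ballDensity_le {r : ℝ} (hα : 0 ≤ α) (hr : 0 < r)
    {E : Set V} (hE : MeasurableSet E) :
    ∫⁻ x, ‖E.indicator (fun _ => (1 : ℝ)) x - ballDensity μ r E x‖ₑ ∂μ ≤
      ENNReal.ofReal (r ^ α) * (2 * fracPerimeter μ α E / μ (ball 0 1)) := by
  set I : ℝ≥0∞ := ∫⁻ x, μ {y ∈ ball x r | (x, y) ∈ separatedPairs E} ∂μ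
  have hω0 : μ (ball (0 : V) 1) ≠ 0 := (measure_ball_pos μ _ one_pos).ne'
  have hωtop : μ (ball (0 : V) 1) ≠ ∞ := measure_ball_lt_top.ne
  set c : ℝ≥0∞ := ENNReal.ofReal (r ^ (-((finrank ℝ V : ℝ) + α)))
  have hc0 : c ≠ 0 := (ENNReal.ofReal_pos.2 (by positivity)).ne'
  calc ∫⁻ x, ‖E.indicator (fun _ => (1 : ℝ)) x - ballDensity μ r E x‖ₑ ∂μ
      = I / μ (ball 0 r) := by
        simp only [enorm_indicator_sub_ballDensity hr hE, Measure.addHaar_ball_center,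
          div_eq_mul_inv]
        rw [lintegral_mul_const' _ _ (ENNReal.inv_ne_top.2 (measure_ball_pos μ _ hr).ne')]
    _ = c * I / (ENNReal.ofReal (r ^ (-α)) * μ (ball 0 1)) := by
        rw [← ofReal_rpow_mul_measure_ball (μ := μ) hr 0,
          ENNReal.mul_div_mul_left _ _ hc0 ofReal_ne_top]
    _ ≤ 2 * fracPerimeter μ α E / (ENNReal.ofReal (r ^ (-α)) * μ (ball 0 1)) :=
        ENNReal.div_le_div_right (lintegral_measure_ball_separatedPairs_le hα hE) _
    _ = ENNReal.ofReal (r ^ α) * (2 * fracPerimeter μ α E / μ (ball 0 1)) := by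
        rw [Real.rpow_neg hr.le, ENNReal.ofReal_inv_of_pos (by positivity), div_eq_mul_inv,
          ENNReal.mul_inv (Or.inr hωtop) (Or.inr hω0), inv_inv, mul_left_comm, div_eq_mul_inv]

theorem cauchySeq_toLp_indicator {ν : Measure V} [IsFiniteMeasure ν] (hνμ : ν ≤ μ) (hα : 0 < α)
    {E : ℕ → Set V} (hE : ∀ n, MeasurableSet (E n)) {C : ℝ≥0∞} (hC : C ≠ ∞)
    (hPE : ∀ n, fracPerimeter μ α (E n) ≤ C)
    (hlim : ∀ x r, ∃ l, Tendsto (fun n => μ.real (E n ∩ ball x r)) atTop (𝓝 l))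
    (hmem : ∀ n, MemLp ((E n).indicator fun _ => (1 : ℝ)) 1 ν) :
    CauchySeq fun n => (hmem n).toLp := by
  refine cauchySeq_of_forall_exists_cauchySeq_mem fun U hU => ?_
  obtain ⟨δ, hδ, hδU⟩ := mem_uniformity_edist.1 hU
  have hω0 : μ (ball (0 : V) 1) ≠ 0 := (measure_ball_pos μ _ one_pos).ne'
  obtain ⟨r, hr, hrδ⟩ := exists_pos_ofReal_rpow_mul_lt hα (K := 2 * C / μ (ball 0 1))
    (ENNReal.div_lt_top (mul_ne_top ofNat_ne_top hC) hω0).ne hδ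
  have hbound : ∀ n x, ‖ballDensity μ r (E n) x‖ ≤ 1 := fun n x => by
    rw [Real.norm_of_nonneg (ballDensity_mem_Icc r _ x).1]
    exact (ballDensity_mem_Icc r _ x).2
  have hdensity : ∀ n, MemLp (ballDensity μ r (E n)) 1 ν := fun n =>
    .of_bound (measurable_ballDensity μ r (hE n)).aestronglyMeasurable 1 (ae_of_all _ (hbound n))
  refine ⟨fun n => (hdensity n).toLp, ?_, fun n => hδU (lt_of_le_of_lt ?_ hrδ)⟩
  · refine cauchySeq_toLp_one_of_dominated_of_ae_tendsto hdensity (integrable_const 1)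
      (fun n => ae_of_all _ (hbound n)) (ae_of_all _ fun x => ?_)
    obtain ⟨l, hl⟩ := hlim x r
    exact ⟨_, hl.div_const _⟩
  · rw [Lp.edist_toLp_toLp, eLpNorm_one_eq_lintegral_enorm]
    calc ∫⁻ x, ‖(E n).indicator (fun _ => (1 : ℝ)) x - ballDensity μ r (E n) x‖ₑ ∂ν
        ≤ ∫⁻ x, ‖(E n).indicator (fun _ => (1 : ℝ)) x - ballDensity μ r (E n) x‖ₑ ∂μ :=
          lintegral_mono' hνμ le_rfl
      _ ≤ ENNReal.ofReal (r ^ α) * (2 * fracPerimeter μ α (E n) / μ (ball 0 1)) :=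
          lintegral_enorm_indicator_sub_ballDensity_le hα.le hr (hE n)
      _ ≤ ENNReal.ofReal (r ^ α) * (2 * C / μ (ball 0 1)) := by
          gcongr
          exact hPE n

theorem exists_subseq_ae_eventually_mem_iff (hα : 0 < α) {E : ℕ → Set V}
    (hE : ∀ n, MeasurableSet (E n)) {C : ℝ≥0∞} (hC : C ≠ ∞)
    (hPE : ∀ n, fracPerimeter μ α (E n) ≤ C) :
    ∃ φ : ℕ → ℕ, StrictMono φ ∧ ∃ F, MeasurableSet F ∧
      ∀ᵐ x ∂μ, ∀ᶠ n in atTop, (x ∈ E (φ n) ↔ x ∈ F) := by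
  obtain ⟨ν, _, hνμ, hμν⟩ := exists_isFiniteMeasure_le_absolutelyContinuous μ
  obtain ⟨φ, hφ, hweak⟩ := exists_subseq_tendsto_measureReal_inter (μ := μ) hE
  have hmem : ∀ n, MemLp ((E (φ n)).indicator fun _ => (1 : ℝ)) 1 ν := fun n =>
    (memLp_const 1).indicator (hE _)
  have hcauchy := cauchySeq_toLp_indicator hνμ hα (fun n => hE (φ n)) hC (fun n => hPE (φ n))
    (fun x r => hweak _ measurableSet_ball measure_ball_lt_top.ne) hmem
  obtain ⟨ψ, hψ, hlim⟩ := exists_subseq_ae_tendsto_of_cauchySeq hmem hcauchy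
  exact ⟨φ ∘ ψ, hφ.comp hψ,
    exists_measurableSet_ae_eventually_mem_iff (fun n => hE _) (hμν.ae_le hlim)⟩

end Compactness

section IsoperimetricConstant

theorem one_lt_rpow_add_rpow_one_sub {a : ℝ≥0∞} (ha0 : a ≠ 0) (ha1 : a < 1) {θ : ℝ}
    (hθ : θ < 1) : 1 < a ^ θ + (1 - a) ^ θ :=
  calc 1 = a + (1 - a) := (add_tsub_cancel_of_le ha1.le).symm
    _ < a ^ θ + (1 - a) ^ θ := by
      refine ENNReal.add_lt_add_of_lt_of_le (tsub_le_self.trans_lt one_lt_top).ne ?_ ?_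
      · simpa using ENNReal.rpow_lt_rpow_of_exponent_gt ha0.bot_lt ha1 hθ
      · simpa using ENNReal.rpow_le_rpow_of_exponent_ge tsub_le_self hθ.le

variable {V : Type*} [NormedAddCommGroup V] [NormedSpace ℝ V]

/-- The exponent `θ` for which `P_t(E) / P_s(E)^θ` is invariant under dilations of `E`. -/
noncomputable def isoExponent (V : Type*) [NormedAddCommGroup V] [NormedSpace ℝ V] (s t : ℝ) : ℝ :=
  (finrank ℝ V - t) / (finrank ℝ V - s)

theorem isoExponent_mem_Ioo {s t : ℝ} (hst : s < t) (ht : t < finrank ℝ V) :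
    isoExponent V s t ∈ Set.Ioo (0 : ℝ) 1 := by
  have hs : 0 < finrank ℝ V - s := sub_pos.2 (hst.trans ht)
  exact ⟨div_pos (sub_pos.2 ht) hs, (div_lt_one hs).2 (by linarith)⟩

theorem lt_finrank_of_lt_one [Nontrivial V] [FiniteDimensional ℝ V] {t : ℝ} (ht : t < 1) :
    t < finrank ℝ V :=
  ht.trans_le (Nat.one_le_cast.2 finrank_pos)

variable [MeasurableSpace V]

/-- The functional `W_{s,t}(E) = ((1-t) P_t(E))^{d-s} / (s P_s(E))^{d-t}`. -/
noncomputable def fracIsoFunctional (μ : Measure V) (s t : ℝ) (E : Set V) : ℝ :=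
  ((1 - t) * (fracPerimeter μ t E).toReal) ^ ((finrank ℝ V : ℝ) - s) /
    (s * (fracPerimeter μ s E).toReal) ^ ((finrank ℝ V : ℝ) - t)

/-- The sets over which the isoperimetric functional is minimized. -/
structure IsCompetitor (μ : Measure V) (t : ℝ) (E : Set V) : Prop where
  measurableSet : MeasurableSet E
  measure_ne_zero : μ E ≠ 0
  measure_ne_top : μ E ≠ ∞
  fracPerimeter_ne_top : fracPerimeter μ t E ≠ ∞

/-- The competitors with `P_s(E) = 1`. As the isoperimetric functional is scale invariant, nothing
is lost by minimizing over these, where it amounts to `P_t`. -/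
def normalizedCompetitors (μ : Measure V) (s t : ℝ) : Set (Set V) :=
  {E | IsCompetitor μ t E ∧ fracPerimeter μ s E = 1}

/-- The infimum of `P_t` subject to `P_s = 1`, equivalently the best constant `m` in
`m * P_s(E)^θ ≤ P_t(E)`. -/
noncomputable def isoConstant (μ : Measure V) (s t : ℝ) : ℝ≥0∞ :=
  sInf (fracPerimeter μ t '' normalizedCompetitors μ s t)

variable [FiniteDimensional ℝ V] [BorelSpace V] {μ : Measure V} [μ.IsAddHaarMeasure] {s t : ℝ}
  {E : Set V}

theorem IsCompetitor.preimage_smul (hE : IsCompetitor μ t E) {c : ℝ} (hc : 0 < c) :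
    IsCompetitor μ t ((c • ·) ⁻¹' E) where
  measurableSet := measurable_const_smul c hE.measurableSet
  measure_ne_zero := by
    rw [Measure.addHaar_preimage_smul μ hc.ne']
    exact mul_ne_zero (ENNReal.ofReal_pos.2 (by positivity)).ne' hE.measure_ne_zero
  measure_ne_top := by
    rw [Measure.addHaar_preimage_smul μ hc.ne']
    exact mul_ne_top ofReal_ne_top hE.measure_ne_top
  fracPerimeter_ne_top := by
    rw [fracPerimeter_preimage_smul hc hE.measurableSet]
    exact mul_ne_top ofReal_ne_top hE.fracPerimeter_ne_top

theorem IsCompetitor.preimage_add (hE : IsCompetitor μ t E) (v : V) :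
    IsCompetitor μ t ((· + v) ⁻¹' E) where
  measurableSet := measurable_add_const v hE.measurableSet
  measure_ne_zero := by
    rw [measure_preimage_add_right]
    exact hE.measure_ne_zero
  measure_ne_top := by
    rw [measure_preimage_add_right]
    exact hE.measure_ne_top
  fracPerimeter_ne_top := by
    rw [fracPerimeter_preimage_add hE.measurableSet]
    exact hE.fracPerimeter_ne_top

theorem preimage_add_mem_normalizedCompetitors (hE : E ∈ normalizedCompetitors μ s t) (v : V) :
    (· + v) ⁻¹' E ∈ normalizedCompetitors μ s t :=
  ⟨hE.1.preimage_add v, (fracPerimeter_preimage_add hE.1.measurableSet v).trans hE.2⟩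

theorem isCompetitor_unitBall [Nontrivial V] (ht0 : 0 < t) (ht1 : t < 1) :
    IsCompetitor μ t (Metric.ball 0 1) where
  measurableSet := measurableSet_ball
  measure_ne_zero := (Metric.measure_ball_pos μ _ one_pos).ne'
  measure_ne_top := measure_ball_lt_top.ne
  fracPerimeter_ne_top := (fracPerimeter_unitBall_lt_top μ ht0 ht1).ne

variable [Nontrivial V]

theorem IsCompetitor.exists_mem_normalizedCompetitors (hs : 0 < s) (hst : s ≤ t)
    (hsd : s < finrank ℝ V) (hE : IsCompetitor μ t E) :
    ∃ G ∈ normalizedCompetitors μ s t,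
      fracPerimeter μ t G * fracPerimeter μ s E ^ isoExponent V s t = fracPerimeter μ t E := by
  have hds : 0 < finrank ℝ V - s := sub_pos.2 hsd
  set p : ℝ≥0∞ := fracPerimeter μ s E
  have hp0 : p ≠ 0 :=
    (fracPerimeter_pos hs.le hE.measurableSet hE.measure_ne_zero hE.measure_ne_top).ne'
  have hptop : p ≠ ∞ := fracPerimeter_ne_top_of_le hs hst hE.measure_ne_top hE.fracPerimeter_ne_top
  have hppos : 0 < p.toReal := toReal_pos hp0 hptop
  set c : ℝ := p.toReal ^ (finrank ℝ V - s)⁻¹ with hc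
  have hcpos : 0 < c := by positivity
  have hscale : ∀ α : ℝ, ENNReal.ofReal (c ^ (α - finrank ℝ V)) =
      p ^ (-((finrank ℝ V - α) / (finrank ℝ V - s))) := fun α => by
    rw [hc, ← Real.rpow_mul hppos.le, ← ENNReal.ofReal_rpow_of_pos hppos, ofReal_toReal hptop]
    congr 1
    ring
  refine ⟨(c • ·) ⁻¹' E, ⟨hE.preimage_smul hcpos, ?_⟩, ?_⟩
  · rw [fracPerimeter_preimage_smul hcpos hE.measurableSet, hscale, div_self hds.ne',
      ENNReal.rpow_neg_one, ENNReal.inv_mul_cancel hp0 hptop]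
  · rw [fracPerimeter_preimage_smul hcpos hE.measurableSet, hscale, mul_right_comm, isoExponent,
      ← ENNReal.rpow_add _ _ hp0 hptop, neg_add_cancel, ENNReal.rpow_zero, one_mul]

theorem normalizedCompetitors_nonempty (hs : 0 < s) (hst : s ≤ t) (ht : t < 1) :
    (normalizedCompetitors μ s t).Nonempty := by
  obtain ⟨G, hG, -⟩ := (isCompetitor_unitBall (hs.trans_le hst) ht).exists_mem_normalizedCompetitors
    (μ := μ) hs hst (lt_finrank_of_lt_one (hst.trans_lt ht))
  exact ⟨G, hG⟩

theorem isoConstant_mul_rpow_le (hs : 0 < s) (hst : s < t) (ht : t < finrank ℝ V)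
    (hE : MeasurableSet E) (hμE : μ E ≠ ∞) :
    isoConstant μ s t * fracPerimeter μ s E ^ isoExponent V s t ≤ fracPerimeter μ t E := by
  rcases eq_or_ne (μ E) 0 with hμ0 | hμ0
  · rw [fracPerimeter_of_measure_zero hμ0, ENNReal.zero_rpow_of_pos (isoExponent_mem_Ioo hst ht).1,
      mul_zero]
    exact zero_le
  rcases eq_or_ne (fracPerimeter μ t E) ∞ with htE | htE
  · exact htE ▸ le_top
  obtain ⟨G, hG, hGE⟩ := IsCompetitor.exists_mem_normalizedCompetitors hs hst.le (hst.trans ht)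
    ⟨hE, hμ0, hμE, htE⟩
  rw [← hGE]
  gcongr
  exact sInf_le (Set.mem_image_of_mem _ hG)

end IsoperimetricConstant

section Existence

variable {V : Type*} [NormedAddCommGroup V] [NormedSpace ℝ V] [MeasurableSpace V]
  [FiniteDimensional ℝ V] [BorelSpace V] {μ : Measure V} [μ.IsAddHaarMeasure] {s t : ℝ}

theorem exists_translated_subseq_ae_eventually_mem_iff (hs : 0 < s) (hst : s < t)
    {E : ℕ → Set V} (hE : ∀ n, MeasurableSet (E n)) {c C : ℝ≥0∞} (hc : 0 < c) (hC : C ≠ ∞)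
    (hsE : ∀ n, c ≤ fracPerimeter μ s (E n)) (htE : ∀ n, fracPerimeter μ t (E n) ≤ C) :
    ∃ φ : ℕ → ℕ, StrictMono φ ∧ ∃ v : ℕ → V, ∃ F, MeasurableSet F ∧ μ F ≠ 0 ∧
      ∀ᵐ x ∂μ, ∀ᶠ n in atTop, (x ∈ (· + v n) ⁻¹' E (φ n) ↔ x ∈ F) := by
  obtain ⟨r, hr, hball⟩ := exists_forall_half_measure_ball_lt μ hs hst hc hC
  choose w hw using fun n => hball (E n) (hE n) (hsE n) (htE n)
  have hA : ∀ n, MeasurableSet ((· + w n) ⁻¹' E n) := fun n => measurable_add_const (w n) (hE n)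
  have hcentered : ∀ n, μ (Metric.ball 0 r) / 2 < μ ((· + w n) ⁻¹' E n ∩ Metric.ball 0 r) :=
    fun n => by
      have hpre : (· + w n) ⁻¹' E n ∩ Metric.ball 0 r =
          (· + w n) ⁻¹' (E n ∩ Metric.ball (w n) r) := by
        ext x
        simp [dist_eq_norm]
      rw [hpre, measure_preimage_add_right, ← Measure.addHaar_ball_center μ (w n)]
      exact hw n
  obtain ⟨φ, hφ, F, hF, hAF⟩ := exists_subseq_ae_eventually_mem_iff (hs.trans hst) hA hC
    fun n => (fracPerimeter_preimage_add (hE n) (w n)).trans_le (htE n)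
  have hhalf : μ (Metric.ball 0 r) / 2 ≤ μ (F ∩ Metric.ball 0 r) :=
    le_measure_inter_of_ae_eventually_mem_iff (fun n => hA (φ n)) hF hAF measurableSet_ball
      measure_ball_lt_top.ne fun n => (hcentered (φ n)).le
  have hμF : 0 < μ F := (ENNReal.half_pos (Metric.measure_ball_pos μ 0 hr).ne').trans_le
    (hhalf.trans (measure_mono Set.inter_subset_left))
  exact ⟨φ, hφ, w ∘ φ, F, hF, hμF.ne', hAF⟩

variable {A : ℕ → Set V} {F : Set V}

theorem measure_ne_top_of_ae_eventually_mem_iff {α : ℝ} (hα : 0 ≤ α) (hαd : α < finrank ℝ V)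
    (hA : ∀ n, MeasurableSet (A n)) (hμA : ∀ n, μ (A n) ≠ ∞) {C : ℝ≥0∞} (hC : C ≠ ∞)
    (hPA : ∀ n, fracPerimeter μ α (A n) ≤ C)
    (hAF : ∀ᵐ x ∂μ, ∀ᶠ n in atTop, (x ∈ A n ↔ x ∈ F)) : μ F ≠ ∞ := by
  obtain ⟨M, hM, hbound⟩ := exists_forall_measure_le_of_fracPerimeter_le μ hα hαd hC
  have hFatou : μ F ≤ liminf (fun n => μ (A n)) atTop :=
    measure_le_liminf_of_ae_eventually_mem (hAF.mono fun x hx hxF => hx.mono fun n hn => hn.2 hxF)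
  refine ne_top_of_le_ne_top hM (hFatou.trans (liminf_le_of_frequently_le' ?_))
  exact Frequently.of_forall fun n => hbound (A n) (hA n) (hμA n) (hPA n)

variable [Nontrivial V]

theorem exists_seq_normalizedCompetitors_tendsto_isoConstant (μ : Measure V) [μ.IsAddHaarMeasure]
    (hs : 0 < s) (hst : s ≤ t) (ht : t < 1) :
    ∃ E : ℕ → Set V, (∀ n, E n ∈ normalizedCompetitors μ s t) ∧
      Tendsto (fun n => fracPerimeter μ t (E n)) atTop (𝓝 (isoConstant μ s t)) ∧
      Antitone fun n => fracPerimeter μ t (E n) := by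
  obtain ⟨u, hu_anti, hu, hu_mem⟩ := exists_seq_tendsto_sInf
    ((normalizedCompetitors_nonempty (μ := μ) hs hst ht).image (fracPerimeter μ t))
    (OrderBot.bddBelow _)
  choose E hE hEu using hu_mem
  obtain rfl : (fun n => fracPerimeter μ t (E n)) = u := funext hEu
  exact ⟨E, hE, hu, hu_anti⟩

theorem exists_seq_normalizedCompetitors_ae_eventually_mem_iff (μ : Measure V)
    [μ.IsAddHaarMeasure] (hs : 0 < s) (hst : s < t) (ht : t < 1) :
    ∃ (A : ℕ → Set V) (F : Set V), (∀ n, A n ∈ normalizedCompetitors μ s t) ∧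
      Tendsto (fun n => fracPerimeter μ t (A n)) atTop (𝓝 (isoConstant μ s t)) ∧
      MeasurableSet F ∧ μ F ≠ 0 ∧ ∀ᵐ x ∂μ, ∀ᶠ n in atTop, (x ∈ A n ↔ x ∈ F) := by
  obtain ⟨E, hE, hlim, hanti⟩ :=
    exists_seq_normalizedCompetitors_tendsto_isoConstant μ hs hst.le ht
  obtain ⟨φ, hφ, v, F, hF, hμF, hAF⟩ := exists_translated_subseq_ae_eventually_mem_iff (μ := μ)
    hs hst (fun n => (hE n).1.measurableSet) one_pos (hE 0).1.fracPerimeter_ne_top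
    (fun n => (hE n).2.ge) fun n => hanti n.zero_le
  refine ⟨fun n => (· + v n) ⁻¹' E (φ n), F,
    fun n => preimage_add_mem_normalizedCompetitors (hE _) _, ?_, hF, hμF, hAF⟩
  exact (hlim.comp hφ.tendsto_atTop).congr fun n =>
    (fracPerimeter_preimage_add (hE _).1.measurableSet _).symm

theorem isoConstant_mul_add_le (hs : 0 < s) (hst : s < t) (ht : t < finrank ℝ V)
    (hA : ∀ n, A n ∈ normalizedCompetitors μ s t)
    (hlim : Tendsto (fun n => fracPerimeter μ t (A n)) atTop (𝓝 (isoConstant μ s t)))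
    (hAF : ∀ᵐ x ∂μ, ∀ᶠ n in atTop, (x ∈ A n ↔ x ∈ F)) (hF : IsCompetitor μ t F) :
    isoConstant μ s t * (fracPerimeter μ s F ^ isoExponent V s t +
      (1 - fracPerimeter μ s F) ^ isoExponent V s t) ≤ isoConstant μ s t := by
  set θ := isoExponent V s t
  have hθ : 0 < θ := (isoExponent_mem_Ioo hst ht).1
  have hAmeas : ∀ n, MeasurableSet (A n) := fun n => (hA n).1.measurableSet
  have hsplit : ∀ n, isoConstant μ s t * (fracPerimeter μ s F ^ θ +
      (1 - fracPerimeter μ s F) ^ θ) ≤ fracPerimeter μ t (A n) +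
        gagliardoMeasure μ t (separatedPairs F \ separatedPairs (A n)) := fun n => by
    have hrest : 1 - fracPerimeter μ s F ≤ fracPerimeter μ s (A n ∆ F) :=
      tsub_le_iff_left.2 ((hA n).2.ge.trans
        (fracPerimeter_le_add_symmDiff (hAmeas n) hF.measurableSet))
    have hfin : μ (A n ∆ F) ≠ ∞ := ne_top_of_le_ne_top
      (add_ne_top.2 ⟨(hA n).1.measure_ne_top, hF.measure_ne_top⟩)
      ((measure_mono (Set.symmDiff_subset_union)).trans (measure_union_le _ _))
    calc _ ≤ isoConstant μ s t * (fracPerimeter μ s F ^ θ + fracPerimeter μ s (A n ∆ F) ^ θ) := by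
          gcongr
      _ ≤ fracPerimeter μ t F + fracPerimeter μ t (A n ∆ F) := by
          rw [mul_add]
          exact add_le_add (isoConstant_mul_rpow_le hs hst ht hF.measurableSet hF.measure_ne_top)
            (isoConstant_mul_rpow_le hs hst ht ((hAmeas n).symmDiff hF.measurableSet) hfin)
      _ ≤ _ := fracPerimeter_symmDiff_add_le (hAmeas n) hF.measurableSet
  have hzero := tendsto_gagliardoMeasure_separatedPairs_sdiff hAmeas hF.measurableSet hAF
    hF.fracPerimeter_ne_top
  exact ge_of_tendsto' (by simpa using hlim.add hzero) hsplit

theorem exists_mem_normalizedCompetitors_fracPerimeter_eq_isoConstant (μ : Measure V)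
    [μ.IsAddHaarMeasure] (hs : 0 < s) (hst : s < t) (ht : t < 1) :
    ∃ F ∈ normalizedCompetitors μ s t, fracPerimeter μ t F = isoConstant μ s t := by
  have htd : t < finrank ℝ V := lt_finrank_of_lt_one ht
  obtain ⟨A, F, hA, hlim, hF, hμF0, hAF⟩ :=
    exists_seq_normalizedCompetitors_ae_eventually_mem_iff μ hs hst ht
  have hAmeas : ∀ n, MeasurableSet (A n) := fun n => (hA n).1.measurableSet
  have hμF : μ F ≠ ∞ := measure_ne_top_of_ae_eventually_mem_iff hs.le (hst.trans htd) hAmeas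
    (fun n => (hA n).1.measure_ne_top) one_ne_top (fun n => (hA n).2.le) hAF
  have htF : fracPerimeter μ t F ≤ isoConstant μ s t :=
    (fracPerimeter_le_liminf hAmeas hF hAF).trans_eq hlim.liminf_eq
  have hsF : fracPerimeter μ s F ≤ 1 := by
    simpa [(hA _).2] using fracPerimeter_le_liminf (α := s) hAmeas hF hAF
  have hm : isoConstant μ s t ≠ ∞ :=
    ne_top_of_le_ne_top (hA 0).1.fracPerimeter_ne_top (sInf_le (Set.mem_image_of_mem _ (hA 0)))
  have hFcomp : IsCompetitor μ t F := ⟨hF, hμF0, hμF, ne_top_of_le_ne_top hm htF⟩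
  have hm0 : isoConstant μ s t ≠ 0 :=
    ((fracPerimeter_pos (hs.trans hst).le hF hμF0 hμF).trans_le htF).ne'
  have hsF_eq : fracPerimeter μ s F = 1 := by
    refine hsF.eq_of_not_lt fun hlt => ?_
    have hgain := one_lt_rpow_add_rpow_one_sub (fracPerimeter_pos hs.le hF hμF0 hμF).ne' hlt
      (isoExponent_mem_Ioo hst htd).2
    refine (isoConstant_mul_add_le hs hst htd hA hlim hAF hFcomp).not_gt ?_
    simpa using ENNReal.mul_lt_mul_right hm0 hm hgain
  have hFmem : F ∈ normalizedCompetitors μ s t := ⟨hFcomp, hsF_eq⟩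
  exact ⟨F, hFmem, htF.antisymm (sInf_le (Set.mem_image_of_mem _ hFmem))⟩

theorem fracIsoFunctional_le_of_mul_rpow_le (hs : 0 < s) (hst : s < t) (ht : t < 1) {E F : Set V}
    (hE : IsCompetitor μ t E) (hsF : fracPerimeter μ s F = 1)
    (h : fracPerimeter μ t F * fracPerimeter μ s E ^ isoExponent V s t ≤ fracPerimeter μ t E) :
    fracIsoFunctional μ s t F ≤ fracIsoFunctional μ s t E := by
  have htd : t < finrank ℝ V := lt_finrank_of_lt_one ht
  have hds : 0 < finrank ℝ V - s := sub_pos.2 (hst.trans htd)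
  have ht1 : 0 < 1 - t := sub_pos.2 ht
  set m : ℝ := (fracPerimeter μ t F).toReal
  set q : ℝ := (fracPerimeter μ t E).toReal
  set p : ℝ := (fracPerimeter μ s E).toReal
  have hp : 0 < p := toReal_pos
    (fracPerimeter_pos hs.le hE.measurableSet hE.measure_ne_zero hE.measure_ne_top).ne'
    (fracPerimeter_ne_top_of_le hs hst.le hE.measure_ne_top hE.fracPerimeter_ne_top)
  have hmq : m * p ^ isoExponent V s t ≤ q := by
    rw [toReal_rpow, ← toReal_mul]
    exact toReal_mono hE.fracPerimeter_ne_top h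
  have hexp : p ^ ((finrank ℝ V : ℝ) - t) =
      (p ^ isoExponent V s t) ^ ((finrank ℝ V : ℝ) - s) := by
    rw [← Real.rpow_mul hp.le, isoExponent, div_mul_cancel₀ _ hds.ne']
  rw [fracIsoFunctional, fracIsoFunctional, hsF, toReal_one, mul_one,
    div_le_div_iff₀ (by positivity) (by positivity)]
  calc ((1 - t) * m) ^ ((finrank ℝ V : ℝ) - s) * (s * p) ^ ((finrank ℝ V : ℝ) - t)
      = ((1 - t) * (m * p ^ isoExponent V s t)) ^ ((finrank ℝ V : ℝ) - s) *
          s ^ ((finrank ℝ V : ℝ) - t) := by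
        rw [Real.mul_rpow hs.le hp.le, hexp, ← mul_assoc (1 - t),
          Real.mul_rpow (mul_nonneg ht1.le toReal_nonneg) (by positivity)]
        ring
    _ ≤ ((1 - t) * q) ^ ((finrank ℝ V : ℝ) - s) * s ^ ((finrank ℝ V : ℝ) - t) := by gcongr

theorem stmt18_general (μ : Measure V) [μ.IsAddHaarMeasure] (hs : 0 < s) (hst : s < t)
    (ht : t < 1) :
    ∃ E₀ : Set V, MeasurableSet E₀ ∧ 0 < μ E₀ ∧ μ E₀ < ∞ ∧ fracPerimeter μ t E₀ < ∞ ∧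
      ∀ E, MeasurableSet E → 0 < μ E → μ E < ∞ → fracPerimeter μ t E < ∞ →
        fracIsoFunctional μ s t E₀ ≤ fracIsoFunctional μ s t E := by
  obtain ⟨F, ⟨hF, hsF⟩, htF⟩ :=
    exists_mem_normalizedCompetitors_fracPerimeter_eq_isoConstant μ hs hst ht
  refine ⟨F, hF.measurableSet, hF.measure_ne_zero.bot_lt, hF.measure_ne_top.lt_top,
    hF.fracPerimeter_ne_top.lt_top, fun E hE hμE0 hμE htE => ?_⟩
  refine fracIsoFunctional_le_of_mul_rpow_le hs hst ht ⟨hE, hμE0.ne', hμE.ne, htE.ne⟩ hsF ?_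
  rw [htF]
  exact isoConstant_mul_rpow_le hs hst (lt_finrank_of_lt_one ht) hE hμE.ne

end Existence

theorem fracPer_eq_fracPerimeter (N : ℕ) (α : ℝ) : fracPer N α = fracPerimeter volume α := by
  ext E
  simp only [fracPer, interEnergy, fracPerimeter, fracKernel, finrank_euclideanSpace_fin]

theorem isoW_eq_fracIsoFunctional (N : ℕ) (s t : ℝ) :
    isoW N s t = fracIsoFunctional volume s t := by
  ext E
  simp only [isoW, fracIsoFunctional, fracPer_eq_fracPerimeter, finrank_euclideanSpace_fin]

/-- Existence of a minimizer for the generalized fractional isoperimetric problem. -/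
theorem stmt18 (N : ℕ) (hN : 2 ≤ N) (s t : ℝ) (hs : 0 < s) (hst : s < t) (ht : t < 1) :
    ∃ E₀ : Set (EuclideanSpace ℝ (Fin N)), MeasurableSet E₀ ∧
      0 < volume E₀ ∧ volume E₀ < ⊤ ∧ fracPer N t E₀ < ⊤ ∧
      ∀ E : Set (EuclideanSpace ℝ (Fin N)), MeasurableSet E →
        0 < volume E → volume E < ⊤ → fracPer N t E < ⊤ →
        isoW N s t E₀ ≤ isoW N s t E := by
  have : Nontrivial (Fin N) := Fin.nontrivial_iff_two_le.2 hN
  simpa only [fracPer_eq_fracPerimeter, isoW_eq_fracIsoFunctional] using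
    stmt18_general volume hs hst ht
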